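/- arXiv:math/0310124 — 3 statements merged into one kernel-verified Lean document; each statement's English description precedes it below -/
import Mathlib

section
/- (Proposition 4, part) If exactly one of n, p is zero (say p = 0 and n ≥ 1, or n = 0 and p ≥ 1), then the scalar curvature function s : ℝ × (0,∞) → ℝ has no critical point: its total (Fréchet) derivative is nonzero at every point (a,c) with c > 0. Consequently there is no U(n+1) × U(p+1)-invariant metric g(a,c) with Hermitian Ricci tensor in this case. -/
/-!
Differentiate `s` along the ray `t ↦ (t a, t c)` at `t = 1`. On this ray
`s = 4n(1 + n - 1/(2ct)) + 4p(1 + p - t (a² + c²)/(2c))`, so the derivative is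
`(2n - 2p(a² + c²))/c`. If exactly one of `n`, `p` vanishes this is nonzero, whereas at a
critical point every directional derivative is zero.
-/

/-- The scalar curvature `s(a,c) = 4n(1 + n - 1/(2c)) + 4p(1 + p - (a²+c²)/(2c))` of the
family of invariant metrics `g(a,c)` on `S^{2n+1} × S^{2p+1}`, as a function of the point
`(a, c) ∈ ℝ × (0,∞)`. -/
noncomputable def s (n p : ℕ) : ℝ × ℝ → ℝ := fun x =>
  4 * n * (1 + (n : ℝ) - 1 / (2 * x.2)) + 4 * p * (1 + (p : ℝ) - (x.1 ^ 2 + x.2 ^ 2) / (2 * x.2))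

/-- Proposition 4 (part): if exactly one of `n, p` is zero, then the scalar curvature
function `s` has no critical point: its total (Fréchet) derivative is nonzero at every
point `(a, c)` with `c > 0`.  Consequently there is no `U(n+1) × U(p+1)`-invariant metric
`g(a,c)` with Hermitian Ricci tensor in this case. -/
theorem stmt16 (n p : ℕ) (h : (n = 0 ∧ 1 ≤ p) ∨ (p = 0 ∧ 1 ≤ n)) :
    ∀ a c : ℝ, 0 < c → ¬ HasFDerivAt (s n p) (0 : ℝ × ℝ →L[ℝ] ℝ) (a, c) := by
  intro a c hc hs
  have hγ : HasDerivAt (fun t : ℝ => (t * a, t * c)) (1 * a, 1 * c) 1 :=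
    ((hasDerivAt_id (1 : ℝ)).mul_const a).prodMk ((hasDerivAt_id (1 : ℝ)).mul_const c)
  have hs' : HasFDerivAt (s n p) (0 : ℝ × ℝ →L[ℝ] ℝ) ((fun t : ℝ => (t * a, t * c)) 1) := by
    simpa using hs
  have h0 : HasDerivAt (s n p ∘ fun t : ℝ => (t * a, t * c)) 0 1 := by
    simpa using hs'.comp_hasDerivAt 1 hγ
  have h1 : HasDerivAt (s n p ∘ fun t : ℝ => (t * a, t * c))
      (2 * n / c - 2 * p * (a ^ 2 + c ^ 2) / c) 1 := by
    have e : HasDerivAt (fun t : ℝ => 4 * n * (1 + (n : ℝ) - t⁻¹ * (1 / (2 * c)))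
        + 4 * p * (1 + (p : ℝ) - t * ((a ^ 2 + c ^ 2) / (2 * c))))
        (4 * n * (-(-((1 : ℝ) ^ 2)⁻¹ * (1 / (2 * c))))
          + 4 * p * (-(1 * ((a ^ 2 + c ^ 2) / (2 * c))))) 1 :=
      ((((hasDerivAt_inv one_ne_zero).mul_const _).const_sub _).const_mul _).add
        ((((hasDerivAt_id (1 : ℝ)).mul_const _).const_sub _).const_mul _)
    -- Along the ray the two formulas agree only for `t ≠ 0`, hence near `t = 1`.
    have e' := e.congr_of_eventuallyEq (f₁ := s n p ∘ fun t : ℝ => (t * a, t * c)) (by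
      filter_upwards [isOpen_ne.mem_nhds (one_ne_zero : (1 : ℝ) ≠ 0)] with t ht
      have ht' : t ≠ 0 := ht
      simp only [s, Function.comp]
      field_simp)
    refine e'.congr_deriv ?_
    field_simp
    ring
  have h2 := h1.unique h0
  have hq : 0 < a ^ 2 + c ^ 2 := by positivity
  rcases h with ⟨rfl, hp⟩ | ⟨rfl, hn⟩
  · have hp' : (0 : ℝ) < p := by exact_mod_cast hp
    have : 0 < 2 * p * (a ^ 2 + c ^ 2) / c := by positivity
    simp only [Nat.cast_zero, mul_zero, zero_div] at h2
    linarith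
  · have hn' : (0 : ℝ) < n := by exact_mod_cast hn
    have : 0 < 2 * n / c := by positivity
    simp only [Nat.cast_zero, mul_zero, zero_mul, zero_div] at h2
    linarith
end

section
/- (Proposition 4, part) If n ≥ 1 and p ≥ 1, then for all (a,c) ∈ ℝ × (0,∞) one has s(a,c) ≤ 4n(n+1) + 4p(1+p) − 4√(n·p), with equality if and only if a = 0 and c = √(n/p); that is, s attains its strict global maximum 4n(n+1) + 4p(1+p) − 4√(np) exactly at the point (a,c) = (0, √(n/p)). -/
/-- Proposition 4 (part): if `n ≥ 1` and `p ≥ 1`, then for all `(a,c) ∈ ℝ × (0,∞)`,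
`s(a,c) ≤ 4n(n+1) + 4p(1+p) - 4√(np)`, with equality iff `a = 0` and `c = √(n/p)`;
i.e. `s` attains its strict global maximum exactly at `(0, √(n/p))`. -/
theorem stmt17 (n p : ℕ) (hn : 1 ≤ n) (hp : 1 ≤ p) :
    ∀ a c : ℝ, 0 < c →
      s n p (a, c) ≤ 4 * n * (n + 1) + 4 * p * (1 + (p : ℝ)) - 4 * Real.sqrt ((n : ℝ) * p) ∧
      (s n p (a, c) = 4 * n * (n + 1) + 4 * p * (1 + (p : ℝ)) - 4 * Real.sqrt ((n : ℝ) * p) ↔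
        a = 0 ∧ c = Real.sqrt ((n : ℝ) / p)) := by
  intro a c hc
  have hp0 : (0 : ℝ) < p := by exact_mod_cast hp
  obtain ⟨r, hr⟩ : ∃ r, r = Real.sqrt ((n : ℝ) / p) := ⟨_, rfl⟩
  have hr0 : 0 ≤ r := hr ▸ Real.sqrt_nonneg _
  have hn_eq : (n : ℝ) = p * r ^ 2 := by
    rw [hr, Real.sq_sqrt (by positivity)]
    field_simp
  have hsqrt : Real.sqrt ((n : ℝ) * p) = p * r := by
    rw [hn_eq, show (p : ℝ) * r ^ 2 * p = (p * r) ^ 2 by ring]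
    exact Real.sqrt_sq (by positivity)
  -- Completing the square: the deficit from the maximum is a positive multiple of
  -- `a² + (c - r)²`.
  have key : 4 * n * (n + 1) + 4 * p * (1 + (p : ℝ)) - 4 * Real.sqrt ((n : ℝ) * p)
      - s n p (a, c) = 2 * p / c * (a ^ 2 + (c - r) ^ 2) := by
    rw [hsqrt]
    simp only [s]
    rw [hn_eq]
    field_simp
    ring
  have hk : 0 < 2 * (p : ℝ) / c := by positivity
  rw [← hr]
  refine ⟨?_, ?_, ?_⟩
  · have : 0 ≤ 2 * (p : ℝ) / c * (a ^ 2 + (c - r) ^ 2) := by positivity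
    linarith
  · intro h
    rw [h, sub_self] at key
    have h0 : a ^ 2 + (c - r) ^ 2 = 0 :=
      (mul_eq_zero.mp key.symm).resolve_left hk.ne'
    have ha : a ^ 2 = 0 := by nlinarith [sq_nonneg a, sq_nonneg (c - r)]
    have hcr : (c - r) ^ 2 = 0 := by nlinarith [sq_nonneg a, sq_nonneg (c - r)]
    exact ⟨pow_eq_zero_iff two_ne_zero |>.mp ha,
      sub_eq_zero.mp (pow_eq_zero_iff two_ne_zero |>.mp hcr)⟩
  · rintro ⟨rfl, rfl⟩
    rw [sub_self] at key
    linarith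
end

section
/- (Proposition 4, part) If n ≥ 1 and p ≥ 1, then a point (a,c) ∈ ℝ × (0,∞) is a critical point of s (i.e., the total derivative of s vanishes at (a,c), equivalently ∂s/∂a = −4pa/c = 0 and ∂s/∂c = 2(n + pa² − pc²)/c² = 0) if and only if a = 0 and c = √(n/p). Hence the critical metric g(0, √(n/p)) is the unique metric in the family with I(a,c)-Hermitian Ricci tensor. -/
/-- The total derivative of `s` is `-4pa/c da + 2(n + pa² - pc²)/c² dc`. -/
lemma hasFDerivAt_s (n p : ℕ) (a c : ℝ) (hc : 0 < c) :
    HasFDerivAt (s n p)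
      ((-4 * p * a / c) • ContinuousLinearMap.fst ℝ ℝ ℝ +
        (2 * (n + p * a ^ 2 - p * c ^ 2) / c ^ 2) • ContinuousLinearMap.snd ℝ ℝ ℝ) (a, c) := by
  have h1 : HasFDerivAt (fun x : ℝ × ℝ => x.1) (ContinuousLinearMap.fst ℝ ℝ ℝ) (a, c) :=
    hasFDerivAt_fst
  have h2 : HasFDerivAt (fun x : ℝ × ℝ => x.2) (ContinuousLinearMap.snd ℝ ℝ ℝ) (a, c) :=
    hasFDerivAt_snd
  have hinv : HasFDerivAt (fun x : ℝ × ℝ => (x.2)⁻¹)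
      ((-(c ^ 2)⁻¹) • ContinuousLinearMap.snd ℝ ℝ ℝ) (a, c) :=
    (hasDerivAt_inv hc.ne').comp_hasFDerivAt (a, c) h2
  have h := ((hinv.const_mul (1 / 2)).const_sub (1 + (n : ℝ))).const_mul (4 * (n : ℝ)) |>.add
    (((((h1.pow 2).add (h2.pow 2)).mul (hinv.const_mul (1 / 2))).const_sub
      (1 + (p : ℝ))).const_mul (4 * (p : ℝ)))
  refine (h.congr_fderiv ?_).congr_of_eventuallyEq (.of_forall fun x => ?_)
  · ext <;> simp <;> field_simp <;> ring
  · simp [s, div_eq_mul_inv, mul_comm]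

/-- Proposition 4 (part): if `n ≥ 1` and `p ≥ 1`, then `(a,c) ∈ ℝ × (0,∞)` is a critical
point of `s` (the total derivative of `s` vanishes at `(a,c)`, equivalently
`∂s/∂a = -4pa/c = 0` and `∂s/∂c = 2(n + pa² - pc²)/c² = 0`) if and only if `a = 0` and
`c = √(n/p)`.  Hence the critical metric `g(0, √(n/p))` is the unique metric in the family
with `I(a,c)`-Hermitian Ricci tensor. -/
theorem stmt18 (n p : ℕ) (hn : 1 ≤ n) (hp : 1 ≤ p) :
    ∀ a c : ℝ, 0 < c →
      (HasFDerivAt (s n p) (0 : ℝ × ℝ →L[ℝ] ℝ) (a, c) ↔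
        a = 0 ∧ c = Real.sqrt ((n : ℝ) / p)) := by
  intro a c hc
  have hn' : (0 : ℝ) < n := by exact_mod_cast hn
  have hp' : (0 : ℝ) < p := by exact_mod_cast hp
  have hs := hasFDerivAt_s n p a c hc
  constructor
  · intro h
    have e := hs.unique h
    have e1 := congrArg (fun L : ℝ × ℝ →L[ℝ] ℝ => L (1, 0)) e
    have e2 := congrArg (fun L : ℝ × ℝ →L[ℝ] ℝ => L (0, 1)) e
    have ha : a = 0 := by simpa [hc.ne', hp'.ne'] using e1
    subst ha
    have e3 : (n : ℝ) - p * c ^ 2 = 0 := by simpa [hc.ne'] using e2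
    refine ⟨rfl, ?_⟩
    rw [eq_comm, Real.sqrt_eq_iff_eq_sq (by positivity) hc.le, div_eq_iff hp'.ne']
    linarith
  · rintro ⟨rfl, h⟩
    have hc2 : (p : ℝ) * c ^ 2 = n := by
      rw [h, Real.sq_sqrt (by positivity)]
      field_simp
    exact hs.congr_fderiv (by simp [hc2])
end
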